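/- arXiv:1912.03725 — 2 statements merged into one kernel-verified Lean document; each statement's English description precedes it below -/
import Mathlib

section
/- Let gamma be a centered Gaussian measure on the real Hilbert space L^2([0,1]) with covariance operator C, which is a positive, self-adjoint, trace-class operator with eigenvalues lambda_1 >= lambda_2 >= ... >= 0 and corresponding orthonormal eigenfunctions. Then the pushforward of gamma under the map f -> ||f||^2 = Integral f(t)^2 dt equals the distribution of sum over k >= 1 of lambda_k * N_k^2, where N_1, N_2, ... are independent standard normal random variables (Karhunen-Loeve expansion of the squared norm of a Gaussian random element). -/
open MeasureTheory Filter Topology ProbabilityTheory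
open scoped ProbabilityTheory RealInnerProductSpace NNReal

/-- Lebesgue measure restricted to `[0,1]`. -/
noncomputable def leb01 : Measure ℝ := volume.restrict (Set.Icc (0 : ℝ) 1)

/-- The Hilbert space `L²([0,1])`. -/
noncomputable abbrev L2unit : Type := MeasureTheory.Lp ℝ 2 leb01

noncomputable instance : MeasurableSpace L2unit := borel L2unit
instance : BorelSpace L2unit := ⟨rfl⟩

/-- A centered Gaussian (Borel probability) measure on `L²([0,1])`: every pushforward
under a continuous linear functional is a centered real Gaussian. -/
def IsCenteredGaussianMeasure (γ : Measure L2unit) : Prop :=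
  IsProbabilityMeasure γ ∧
    ∀ L : L2unit →L[ℝ] ℝ, ∃ v : ℝ≥0, γ.map L = gaussianReal 0 v

lemma kl_measurable_tsum_sq : Measurable (fun x : ℕ → ℝ => ∑' k, (x k) ^ 2) := by
  have h : (fun x : ℕ → ℝ => ∑' k, (x k) ^ 2)
      = fun x => (∑' k, ENNReal.ofReal ((x k) ^ 2)).toReal := by
    funext x
    rw [ENNReal.tsum_toReal_eq (fun _ => ENNReal.ofReal_ne_top)]
    exact tsum_congr fun k => (ENNReal.toReal_ofReal (sq_nonneg _)).symm
  rw [h]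
  refine Measurable.ennreal_toReal (Measurable.ennreal_tsum fun k => ?_)
  fun_prop

lemma kl_isGaussian (γ : Measure L2unit) (hγ : IsCenteredGaussianMeasure γ) : IsGaussian γ where
  map_eq_gaussianReal L := by
    obtain ⟨v, hv⟩ := hγ.2 L
    have hm : AEMeasurable L γ := L.continuous.measurable.aemeasurable
    have h1 : ∫ x, L x ∂γ = 0 := by
      have := integral_map (f := fun x : ℝ => x) hm (by fun_prop)
      rw [← this, hv]; simp
    have h2 : Var[L; γ] = v := by
      rw [← variance_id_map hm, hv, variance_id_gaussianReal]
    rw [hv, h1, h2]; simp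

lemma kl_iIndepFun (γ : Measure L2unit) [IsGaussian γ] (b : ℕ → L2unit)
    (h : ∀ i j, i ≠ j → cov[fun f => ⟪b i, f⟫, fun f => ⟪b j, f⟫; γ] = 0) :
    iIndepFun (fun k (f : L2unit) => (⟪b k, f⟫ : ℝ)) γ := by
  rw [iIndepFun_iff_finset]
  intro s
  have hg : HasGaussianLaw (fun (f : L2unit) => fun (i : s) => (⟪b i, f⟫ : ℝ)) γ := by
    constructor
    let L : L2unit →L[ℝ] (s → ℝ) := ContinuousLinearMap.pi fun i => innerSL ℝ (b i)
    exact (inferInstance : IsGaussian (γ.map L))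
  exact hg.iIndepFun_of_covariance_eq_zero fun i j hij =>
    h i j fun e => hij (Subtype.ext e)

/-- **Karhunen–Loève expansion of the squared norm.**
If `γ` is a centered Gaussian measure on `L²([0,1])` with positive, self-adjoint,
trace-class covariance operator `C` having eigenvalues `λ₁ ≥ λ₂ ≥ ⋯ ≥ 0` with
corresponding orthonormal basis of eigenfunctions `b`, then the pushforward of `γ`
under `f ↦ ‖f‖²` is the distribution of `∑ₖ λₖ Nₖ²` for i.i.d. standard normals `Nₖ`. -/
theorem karhunen_loeve_squared_norm
    (γ : Measure L2unit) (hγ : IsCenteredGaussianMeasure γ)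
    (C : L2unit →L[ℝ] L2unit)
    (hcov : ∀ x y : L2unit, ⟪C x, y⟫ = ∫ f, ⟪f, x⟫ * ⟪f, y⟫ ∂γ)
    (hpos : ∀ x : L2unit, 0 ≤ ⟪C x, x⟫)
    (hselfadj : ∀ x y : L2unit, ⟪C x, y⟫ = ⟪x, C y⟫)
    (lam : ℕ → ℝ) (hlam_nonneg : ∀ k, 0 ≤ lam k) (hlam_mono : Antitone lam)
    (hlam_summable : Summable lam)
    (b : HilbertBasis ℕ ℝ L2unit) (heigen : ∀ k, C (b k) = lam k • b k)
    {Ω : Type*} [MeasureSpace Ω] [IsProbabilityMeasure (ℙ : Measure Ω)]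
    (N : ℕ → Ω → ℝ) (hNmeas : ∀ k, Measurable (N k))
    (hNindep : iIndepFun N (ℙ : Measure Ω))
    (hNgauss : ∀ k, (ℙ : Measure Ω).map (N k) = gaussianReal 0 1) :
    γ.map (fun f : L2unit => ‖f‖ ^ 2) =
      (ℙ : Measure Ω).map (fun ω => ∑' k, lam k * (N k ω) ^ 2) := by
  haveI := hγ.1
  haveI := kl_isGaussian γ hγ
  have hmL : ∀ x : L2unit, Measurable (fun f : L2unit => (⟪x, f⟫ : ℝ)) := fun x =>
    (innerSL ℝ x).continuous.measurable
  have hmean : ∀ x : L2unit, ∫ f, (⟪x, f⟫ : ℝ) ∂γ = 0 := by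
    intro x
    obtain ⟨v, hv⟩ := hγ.2 (innerSL ℝ x)
    have := integral_map (μ := γ) (φ := fun f : L2unit => (⟪x, f⟫ : ℝ)) (f := fun x : ℝ => x)
      (hmL x).aemeasurable (by fun_prop)
    rw [← this]
    change ∫ y, y ∂(γ.map (innerSL ℝ x)) = 0
    rw [hv]; simp
  have hLp : ∀ x : L2unit, MemLp (fun f : L2unit => (⟪x, f⟫ : ℝ)) 2 γ := fun x =>
    IsGaussian.memLp_dual γ (innerSL ℝ x) 2 (by norm_num)
  have hc : ∀ x y : L2unit, cov[fun f => ⟪x, f⟫, fun f => ⟪y, f⟫; γ] = ⟪C x, y⟫ := by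
    intro x y
    rw [covariance_eq_sub (hLp x) (hLp y), hmean, hmean, hcov]
    simp [real_inner_comm]
  have hcb : ∀ i j, cov[fun f => ⟪b i, f⟫, fun f => ⟪b j, f⟫; γ] = if i = j then lam i else 0 := by
    intro i j
    rw [hc, heigen, real_inner_smul_left, orthonormal_iff_ite.1 b.orthonormal i j]
    simp
  have hind : iIndepFun (fun k (f : L2unit) => (⟪b k, f⟫ : ℝ)) γ :=
    kl_iIndepFun γ b fun i j hij => by rw [hcb, if_neg hij]
  have hlaw1 : ∀ k, γ.map (fun f : L2unit => (⟪b k, f⟫ : ℝ)) = gaussianReal 0 (lam k).toNNReal := by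
    intro k
    have h := IsGaussian.map_eq_gaussianReal (μ := γ) (innerSL ℝ (b k))
    have h2 : Var[fun f : L2unit => (⟪b k, f⟫ : ℝ); γ] = lam k := by
      rw [← covariance_self (hmL _).aemeasurable, hcb, if_pos rfl]
    change γ.map (fun f : L2unit => (⟪b k, f⟫ : ℝ)) = gaussianReal (∫ f, (⟪b k, f⟫ : ℝ) ∂γ)
      (Var[fun f : L2unit => (⟪b k, f⟫ : ℝ); γ]).toNNReal at h
    rw [h, hmean, h2]
  have hmN : ∀ k, Measurable (fun ω => √(lam k) * N k ω) := fun k => (hNmeas k).const_mul _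
  have hlaw2 : ∀ k, (ℙ : Measure Ω).map (fun ω => √(lam k) * N k ω)
      = gaussianReal 0 (lam k).toNNReal := by
    intro k
    have h := Measure.map_map (μ := (ℙ : Measure Ω)) (measurable_const_mul √(lam k)) (hNmeas k)
    rw [hNgauss, gaussianReal_map_const_mul] at h
    rw [show (fun ω => √(lam k) * N k ω) = (fun x => √(lam k) * x) ∘ N k from rfl, ← h]
    congr 1
    · simp
    · ext
      simp [Real.sq_sqrt (hlam_nonneg k), hlam_nonneg k]
  have hind2 : iIndepFun (fun k ω => √(lam k) * N k ω) (ℙ : Measure Ω) :=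
    hNindep.comp (fun k x => √(lam k) * x) fun k => measurable_const_mul _
  have hjoint : γ.map (fun f k => (⟪b k, f⟫ : ℝ))
      = (ℙ : Measure Ω).map (fun ω k => √(lam k) * N k ω) := by
    rw [hind.map_fun_eq_infinitePi_map (fun k => hmL _), hind2.map_fun_eq_infinitePi_map hmN]
    simp_rw [hlaw1, hlaw2]
  have e1 : (fun f : L2unit => ‖f‖ ^ 2)
      = (fun x : ℕ → ℝ => ∑' k, (x k) ^ 2) ∘ (fun f k => (⟪b k, f⟫ : ℝ)) := by
    funext f
    have := b.tsum_inner_mul_inner f f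
    rw [real_inner_self_eq_norm_sq] at this
    rw [← this]
    refine tsum_congr fun k => ?_
    rw [real_inner_comm, sq]
  have e2 : (fun ω => ∑' k, lam k * (N k ω) ^ 2)
      = (fun x : ℕ → ℝ => ∑' k, (x k) ^ 2) ∘ (fun ω k => √(lam k) * N k ω) := by
    funext ω
    refine tsum_congr fun k => ?_
    rw [mul_pow, Real.sq_sqrt (hlam_nonneg k)]
  rw [e1, e2, ← Measure.map_map kl_measurable_tsum_sq (measurable_pi_lambda _ fun k => hmL _),
    ← Measure.map_map kl_measurable_tsum_sq (measurable_pi_lambda _ hmN), hjoint]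
end

section
/- Let (Y_i, X_i), i = 1, 2, ..., be i.i.d. copies of (Y, X), where Y is a real random variable with atomless distribution and X is a random element of L^2([0,1]). Fix t in [0,1] such that the distribution of X(t) is atomless. Define V_i(t) = E[ 1{(y - Y)(x(t) - X(t)) > 0} ] evaluated at (y, x) = (Y_i, X_i), minus 0.5, and W_i(t) = n^{-1} * sum over j = 1..n of 1{(Y_i - Y_j)(X_i(t) - X_j(t)) > 0} - 0.5. Then max over 1 <= i <= n of |V_i(t) - W_i(t)| converges to 0 almost surely as n tends to infinity. -/
open MeasureTheory Filter Topology ProbabilityTheory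
open scoped ProbabilityTheory

/-- The concordance indicator `1{a * b > 0}` (as a real number). -/
noncomputable def concord (a b : ℝ) : ℝ := if 0 < a * b then 1 else 0

namespace ConcordGC

lemma exists_nhd (ν : Measure EReal) [IsFiniteMeasure ν] (y : EReal) (h : ν {y} = 0)
    (ε : ENNReal) (hε : 0 < ε) :
    ∃ I ∈ 𝓝 y, I.OrdConnected ∧ MeasurableSet I ∧ ν I < ε := by
  obtain ⟨U, hyU, hU, hlt⟩ := Set.exists_isOpen_lt_of_lt (μ := ν) {y} ε (by rw [h]; exact hε)
  have hn : U ∈ 𝓝 y := hU.mem_nhds (hyU rfl)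
  have hoc : (Set.ordConnectedComponent U y).OrdConnected := inferInstance
  refine ⟨Set.ordConnectedComponent U y, ?_, hoc, hoc.measurableSet, ?_⟩
  · exact Set.ordConnectedComponent_mem_nhds.2 hn
  · exact (measure_mono Set.ordConnectedComponent_subset).trans_lt hlt

open Classical in
/-- Extended concordance indicator. -/
noncomputable def g (p z : EReal × EReal) : ℝ :=
  if (z.1 < p.1 ∧ z.2 < p.2) ∨ (p.1 < z.1 ∧ p.2 < z.2) then 1 else 0

lemma g_meas (p : EReal × EReal) : Measurable (g p) := by
  unfold g
  refine Measurable.ite ?_ measurable_const measurable_const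
  exact ((measurableSet_lt measurable_fst measurable_const).inter
    (measurableSet_lt measurable_snd measurable_const)).union
    ((measurableSet_lt measurable_const measurable_fst).inter
    (measurableSet_lt measurable_const measurable_snd))

lemma g_nonneg (p z) : 0 ≤ g p z := by unfold g; split_ifs <;> norm_num
lemma g_le (p z) : g p z ≤ 1 := by unfold g; split_ifs <;> norm_num

lemma lt_iff_of_notMem {I : Set EReal} (hI : I.OrdConnected) {a b u : EReal} (ha : a ∈ I)
    (hb : b ∈ I) (hu : u ∉ I) : (u < a ↔ u < b) ∧ (a < u ↔ b < u) := by
  have key : ∀ {a b : EReal}, a ∈ I → b ∈ I → (u < a → u < b) ∧ (a < u → b < u) := by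
    intro a b ha hb
    constructor
    · intro h
      by_contra h'
      exact hu (hI.out hb ha ⟨not_lt.1 h', h.le⟩)
    · intro h
      by_contra h'
      exact hu (hI.out ha hb ⟨h.le, not_lt.1 h'⟩)
  exact ⟨⟨(key ha hb).1, (key hb ha).1⟩, ⟨(key ha hb).2, (key hb ha).2⟩⟩

lemma g_close {I J : Set EReal} (hI : I.OrdConnected) (hJ : J.OrdConnected)
    {p q : EReal × EReal} (hp : p ∈ I ×ˢ J) (hq : q ∈ I ×ˢ J) (z : EReal × EReal) :
    |g q z - g p z| ≤ (Prod.fst ⁻¹' I ∪ Prod.snd ⁻¹' J).indicator (fun _ => (1 : ℝ)) z := by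
  by_cases hz : z ∈ (Prod.fst ⁻¹' I ∪ Prod.snd ⁻¹' J)
  · rw [Set.indicator_of_mem hz, abs_le]
    constructor <;> linarith [g_nonneg p z, g_nonneg q z, g_le p z, g_le q z]
  · rw [Set.indicator_of_notMem hz]
    simp only [Set.mem_union, Set.mem_preimage, not_or] at hz
    have h1 := lt_iff_of_notMem hI hp.1 hq.1 hz.1
    have h2 := lt_iff_of_notMem hJ hp.2 hq.2 hz.2
    have : g q z = g p z := by
      unfold g
      simp only [h1.1, h1.2, h2.1, h2.2]
    simp [this]

variable {Ω : Type*} [MeasurableSpace Ω] {P : Measure Ω} [IsProbabilityMeasure P]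

lemma slln (Z : ℕ → Ω → EReal × EReal) (hZ : ∀ i, Measurable (Z i))
    (hind : iIndepFun Z P) (hid : ∀ i, IdentDistrib (Z i) (Z 0) P P)
    (f : EReal × EReal → ℝ) (hf : Measurable f) (hb : ∀ z, |f z| ≤ 1) :
    ∀ᵐ ω ∂P, Tendsto (fun n : ℕ => (n : ℝ)⁻¹ * ∑ j ∈ Finset.range n, f (Z j ω)) atTop
      (𝓝 (∫ ω, f (Z 0 ω) ∂P)) := by
  have := strong_law_ae_real (μ := P) (fun i ω => f (Z i ω))
    (Integrable.of_bound (hf.comp (hZ 0)).aestronglyMeasurable 1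
      (Eventually.of_forall fun ω => hb _))
    (fun i j hij => (hind.indepFun hij).comp hf hf)
    (fun i => (hid i).comp hf)
  filter_upwards [this] with ω h
  simpa only [div_eq_inv_mul] using h

lemma key (Z : ℕ → Ω → EReal × EReal) (hZ : ∀ i, Measurable (Z i))
    (hind : iIndepFun Z P) (hid : ∀ i, IdentDistrib (Z i) (Z 0) P P)
    (h1 : ∀ c, P {ω | (Z 0 ω).1 = c} = 0) (h2 : ∀ c, P {ω | (Z 0 ω).2 = c} = 0)
    (ε : ℝ) (hε : 0 < ε) :
    ∀ᵐ ω ∂P, ∀ᶠ n : ℕ in atTop, ∀ q,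
      |(∫ ω, g q (Z 0 ω) ∂P) - (n : ℝ)⁻¹ * ∑ j ∈ Finset.range n, g q (Z j ω)| ≤ 7 * ε := by
  have m1 : Measurable fun ω => (Z 0 ω).1 := measurable_fst.comp (hZ 0)
  have m2 : Measurable fun ω => (Z 0 ω).2 := measurable_snd.comp (hZ 0)
  have hpr1 : IsProbabilityMeasure (P.map fun ω => (Z 0 ω).1) :=
    Measure.isProbabilityMeasure_map m1.aemeasurable
  have hpr2 : IsProbabilityMeasure (P.map fun ω => (Z 0 ω).2) :=
    Measure.isProbabilityMeasure_map m2.aemeasurable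
  have e1 : ∀ y, ∃ I ∈ 𝓝 y, I.OrdConnected ∧ MeasurableSet I ∧
      (P.map fun ω => (Z 0 ω).1) I < ENNReal.ofReal ε := fun y =>
    exists_nhd _ y (by rw [Measure.map_apply m1 (measurableSet_singleton y)]; exact h1 y) _
      (by simpa using hε)
  have e2 : ∀ y, ∃ I ∈ 𝓝 y, I.OrdConnected ∧ MeasurableSet I ∧
      (P.map fun ω => (Z 0 ω).2) I < ENNReal.ofReal ε := fun y =>
    exists_nhd _ y (by rw [Measure.map_apply m2 (measurableSet_singleton y)]; exact h2 y) _
      (by simpa using hε)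
  choose I hIn hIo hIm hI using e1
  choose J hJn hJo hJm hJ using e2
  obtain ⟨T, hT⟩ := CompactSpace.elim_nhds_subcover
    (fun p : EReal × EReal => I p.1 ×ˢ J p.2)
    (fun p => prod_mem_nhds (hIn p.1) (hJn p.2))
  let D : EReal × EReal → Set (EReal × EReal) := fun p =>
    Prod.fst ⁻¹' (I p.1) ∪ Prod.snd ⁻¹' (J p.2)
  have hDm : ∀ p, MeasurableSet (D p) := fun p =>
    (measurable_fst (hIm p.1)).union (measurable_snd (hJm p.2))
  let d : EReal × EReal → EReal × EReal → ℝ := fun p => (D p).indicator (fun _ => (1 : ℝ))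
  have hdm : ∀ p, Measurable (d p) := fun p => measurable_const.indicator (hDm p)
  have hdb : ∀ p z, |d p z| ≤ 1 := fun p z => by
    by_cases hz : z ∈ D p <;> simp [d, hz]
  have hgb : ∀ p z, |g p z| ≤ 1 := fun p z => by
    rw [abs_of_nonneg (g_nonneg p z)]; exact g_le p z
  have hdi : ∀ p, Integrable (fun ω => d p (Z 0 ω)) P := fun p =>
    Integrable.of_bound ((hdm p).comp (hZ 0)).aestronglyMeasurable 1
      (Eventually.of_forall fun ω => hdb _ _)
  have hgi : ∀ p, Integrable (fun ω => g p (Z 0 ω)) P := fun p =>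
    Integrable.of_bound ((g_meas p).comp (hZ 0)).aestronglyMeasurable 1
      (Eventually.of_forall fun ω => hgb _ _)
  have hdint : ∀ p, ∫ ω, d p (Z 0 ω) ∂P ≤ 2 * ε := by
    intro p
    have : ∫ ω, d p (Z 0 ω) ∂P = P.real (Z 0 ⁻¹' D p) := by
      rw [← integral_indicator_one ((hZ 0) (hDm p))]
      rfl
    rw [this]
    have ha : P.real ((fun ω => (Z 0 ω).1) ⁻¹' I p.1) ≤ ε := by
      have := (hI p.1).le
      rw [Measure.map_apply m1 (hIm _)] at this
      exact ENNReal.toReal_le_of_le_ofReal hε.le this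
    have hb : P.real ((fun ω => (Z 0 ω).2) ⁻¹' J p.2) ≤ ε := by
      have := (hJ p.2).le
      rw [Measure.map_apply m2 (hJm _)] at this
      exact ENNReal.toReal_le_of_le_ofReal hε.le this
    have hc : P.real (Z 0 ⁻¹' D p) ≤ P.real ((fun ω => (Z 0 ω).1) ⁻¹' I p.1) +
      P.real ((fun ω => (Z 0 ω).2) ⁻¹' J p.2) := measureReal_union_le _ _
    linarith
  have hs1 : ∀ᵐ ω ∂P, ∀ p ∈ T, Tendsto (fun n : ℕ => (n : ℝ)⁻¹ * ∑ j ∈ Finset.range n, g p (Z j ω))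
      atTop (𝓝 (∫ ω, g p (Z 0 ω) ∂P)) :=
    (ae_ball_iff T.countable_toSet).2 fun p _ => slln Z hZ hind hid _ (g_meas p) (hgb p)
  have hs2 : ∀ᵐ ω ∂P, ∀ p ∈ T, Tendsto (fun n : ℕ => (n : ℝ)⁻¹ * ∑ j ∈ Finset.range n, d p (Z j ω))
      atTop (𝓝 (∫ ω, d p (Z 0 ω) ∂P)) :=
    (ae_ball_iff T.countable_toSet).2 fun p _ => slln Z hZ hind hid _ (hdm p) (hdb p)
  filter_upwards [hs1, hs2] with ω w1 w2
  have v1 : ∀ᶠ n : ℕ in atTop, ∀ p ∈ T,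
      |(n : ℝ)⁻¹ * ∑ j ∈ Finset.range n, g p (Z j ω) - ∫ ω, g p (Z 0 ω) ∂P| < ε :=
    (Finset.eventually_all T).2 fun p hp => by
      simpa [Real.dist_eq] using Metric.tendsto_nhds.1 (w1 p hp) ε hε
  have v2 : ∀ᶠ n : ℕ in atTop, ∀ p ∈ T,
      |(n : ℝ)⁻¹ * ∑ j ∈ Finset.range n, d p (Z j ω) - ∫ ω, d p (Z 0 ω) ∂P| < ε :=
    (Finset.eventually_all T).2 fun p hp => by
      simpa [Real.dist_eq] using Metric.tendsto_nhds.1 (w2 p hp) ε hε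
  filter_upwards [v1, v2] with n k1 k2 q
  have hq : q ∈ ⋃ x ∈ T, I x.1 ×ˢ J x.2 := by rw [hT]; trivial
  simp only [Set.mem_iUnion] at hq
  obtain ⟨p, hpT, hqp⟩ := hq
  have hpp : p ∈ I p.1 ×ˢ J p.2 := ⟨mem_of_mem_nhds (hIn _), mem_of_mem_nhds (hJn _)⟩
  have hcl : ∀ z, |g q z - g p z| ≤ d p z := g_close (hIo _) (hJo _) hpp hqp
  have i1 : |(∫ ω, g q (Z 0 ω) ∂P) - ∫ ω, g p (Z 0 ω) ∂P| ≤ ∫ ω, d p (Z 0 ω) ∂P := by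
    rw [← integral_sub (hgi q) (hgi p), ← Real.norm_eq_abs]
    exact norm_integral_le_of_norm_le (f := fun ω => g q (Z 0 ω) - g p (Z 0 ω)) (hdi p) (Eventually.of_forall fun ω => hcl _)
  have i2 : |(n : ℝ)⁻¹ * ∑ j ∈ Finset.range n, g q (Z j ω) -
      (n : ℝ)⁻¹ * ∑ j ∈ Finset.range n, g p (Z j ω)| ≤
      (n : ℝ)⁻¹ * ∑ j ∈ Finset.range n, d p (Z j ω) := by
    rw [← mul_sub, ← Finset.sum_sub_distrib, abs_mul, abs_of_nonneg (by positivity)]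
    gcongr
    exact (Finset.abs_sum_le_sum_abs _ _).trans (Finset.sum_le_sum fun j _ => hcl _)
  have a1 := abs_le.1 i1
  have a2 := abs_le.1 i2
  have a3 := abs_lt.1 (k1 p hpT)
  have a4 := abs_lt.1 (k2 p hpT)
  have a5 := hdint p
  rw [abs_le]
  constructor <;> linarith [a1.1, a1.2, a2.1, a2.2, a3.1, a3.2, a4.1, a4.2]

lemma concord_eq (a b u v : ℝ) :
    concord (a - u) (b - v) = g ((a : EReal), (b : EReal)) ((u : EReal), (v : EReal)) := by
  unfold concord g
  simp only [EReal.coe_lt_coe_iff, mul_pos_iff, sub_pos, sub_neg]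

end ConcordGC

/-- Fix `t ∈ [0,1]`. Let `V i (t)` be the conditional concordance
probability given `(Y i, X i)` (centered by `0.5`) and `W n i (t)` its empirical
counterpart.  Then `max_{1 ≤ i ≤ n} |V i (t) - W n i (t)| → 0` almost surely. -/
theorem sup_abs_V_sub_W_tendsto_zero_ae
    {Ω : Type*} [MeasureSpace Ω] [IsProbabilityMeasure (ℙ : Measure Ω)]
    (Y : ℕ → Ω → ℝ) (X : ℕ → Ω → ℝ → ℝ)
    (hYmeas : ∀ i, Measurable (Y i)) (hXmeas : ∀ i, Measurable (X i))
    (hindep : iIndepFun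
      (fun i ω => (Y i ω, X i ω)) (ℙ : Measure Ω))
    (hident : ∀ i, IdentDistrib (fun ω => (Y i ω, X i ω)) (fun ω => (Y 0 ω, X 0 ω))
      (ℙ : Measure Ω) (ℙ : Measure Ω))
    (hYatomless : ∀ c : ℝ, (ℙ : Measure Ω) {ω | Y 0 ω = c} = 0)
    (t : ℝ) (ht : t ∈ Set.Icc (0 : ℝ) 1)
    (hXatomless : ∀ c : ℝ, (ℙ : Measure Ω) {ω | X 0 ω t = c} = 0)
    -- the conditional concordance probability `V i (t)`, centered by `0.5`
    (V : ℕ → Ω → ℝ)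
    (hV : ∀ i ω, V i ω =
      (∫ ω', concord (Y i ω - Y 0 ω') (X i ω t - X 0 ω' t) ∂(ℙ : Measure Ω)) - 0.5)
    -- its empirical counterpart `W n i (t)`
    (W : ℕ → ℕ → Ω → ℝ)
    (hW : ∀ n i ω, W n i ω =
      (n : ℝ)⁻¹ * ∑ j ∈ Finset.range n,
        concord (Y i ω - Y j ω) (X i ω t - X j ω t) - 0.5) :
    ∀ᵐ ω ∂(ℙ : Measure Ω),
      Tendsto (fun n => ⨆ i ∈ Finset.range n, |V i ω - W n i ω|) atTop (𝓝 0) := by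
  let Φ : ℝ × (ℝ → ℝ) → EReal × EReal := fun z => ((z.1 : EReal), (z.2 t : EReal))
  have hΦ : Measurable Φ :=
    (measurable_coe_real_ereal.comp measurable_fst).prodMk
      (measurable_coe_real_ereal.comp ((measurable_pi_apply t).comp measurable_snd))
  let Z : ℕ → Ω → EReal × EReal := fun i ω => Φ (Y i ω, X i ω)
  have hZ : ∀ i, Measurable (Z i) := fun i => hΦ.comp ((hYmeas i).prodMk (hXmeas i))
  have hind : iIndepFun Z (ℙ : Measure Ω) := hindep.comp (fun _ => Φ) (fun _ => hΦ)
  have hid : ∀ i, IdentDistrib (Z i) (Z 0) (ℙ : Measure Ω) ℙ := fun i => (hident i).comp hΦ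
  have atom : ∀ f : Ω → ℝ, (∀ c : ℝ, (ℙ : Measure Ω) {ω | f ω = c} = 0) →
      ∀ c : EReal, (ℙ : Measure Ω) {ω | (f ω : EReal) = c} = 0 := by
    intro f hf c
    induction c with
    | bot => simp
    | top => simp
    | coe c => simpa using hf c
  have main : ∀ᵐ ω ∂(ℙ : Measure Ω), ∀ k : ℕ, ∀ᶠ n : ℕ in atTop, ∀ q,
      |(∫ ω, ConcordGC.g q (Z 0 ω)) - (n : ℝ)⁻¹ * ∑ j ∈ Finset.range n, ConcordGC.g q (Z j ω)|
        ≤ 7 * (1 / ((k : ℝ) + 1)) :=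
    ae_all_iff.2 fun k => ConcordGC.key Z hZ hind hid (atom _ hYatomless) (atom _ hXatomless) _
      Nat.one_div_pos_of_nat
  filter_upwards [main] with ω hω
  rw [Metric.tendsto_nhds]
  intro ε hε
  obtain ⟨k, hk⟩ := exists_nat_one_div_lt (show (0 : ℝ) < ε / 7 by positivity)
  filter_upwards [hω k] with n hn
  have hb : ∀ i, |V i ω - W n i ω| ≤ 7 * (1 / ((k : ℝ) + 1)) := by
    intro i
    have := hn (Z i ω)
    rw [hV, hW, sub_sub_sub_cancel_right]
    simp only [ConcordGC.concord_eq]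
    exact this
  have hnn : (0 : ℝ) ≤ 7 * (1 / ((k : ℝ) + 1)) := by positivity
  have h0 : 0 ≤ ⨆ i ∈ Finset.range n, |V i ω - W n i ω| :=
    Real.iSup_nonneg fun i => Real.iSup_nonneg fun _ => abs_nonneg _
  have h1 : (⨆ i ∈ Finset.range n, |V i ω - W n i ω|) ≤ 7 * (1 / ((k : ℝ) + 1)) :=
    Real.iSup_le (fun i => Real.iSup_le (fun _ => hb i) hnn) hnn
  rw [Real.dist_eq, sub_zero, abs_of_nonneg h0]
  linarith
end
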